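/- Let L be an n×n real symmetric positive semidefinite matrix and let p be a real polynomial such that 0 ≤ p(λ) ≤ 1 for every eigenvalue λ of L (i.e. for every i, 0 ≤ p(hL.eigenvalues i) ≤ 1, where hL is the proof that L is Hermitian). Then for every x ∈ ℝⁿ, the Dirichlet energy does not increase under the filter p(L) = Polynomial.aeval L p: ⟨p(L) x, L (p(L) x)⟩ ≤ ⟨x, L x⟩, where ⟨·,·⟩ is the Euclidean inner product (dot product) on ℝⁿ. -/

import Mathlib

open Matrix

open Matrix

lemma aeval_quadForm {n : ℕ} (L : Matrix (Fin n) (Fin n) ℝ) (hL : L.IsHermitian) :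
    ∃ U : Matrix (Fin n) (Fin n) ℝ, ∀ (q : Polynomial ℝ),
      Polynomial.aeval L q = U * diagonal (fun i => q.eval (hL.eigenvalues i)) * Uᵀ := by
  refine ⟨(hL.eigenvectorUnitary : Matrix (Fin n) (Fin n) ℝ), fun q => ?_⟩
  have h := hL.spectral_theorem
  have hd : Polynomial.aeval (diagonal hL.eigenvalues) q
      = diagonal (fun i => q.eval (hL.eigenvalues i)) := by
    have h1 := Polynomial.aeval_algHom_apply (Matrix.diagonalAlgHom (n := Fin n) (α := ℝ) ℝ)
      hL.eigenvalues q
    simp only [Matrix.diagonalAlgHom_apply] at h1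
    rw [h1]
    congr 1
    funext i
    have h2 := Polynomial.aeval_algHom_apply (Pi.evalAlgHom ℝ (fun _ : Fin n => ℝ) i)
      hL.eigenvalues q
    simpa [Polynomial.coe_aeval_eq_eval] using h2.symm
  have h3 : L = Unitary.conjStarAlgAut ℝ _ hL.eigenvectorUnitary (diagonal hL.eigenvalues) := by
    simpa [Function.comp_def] using h
  conv_lhs => rw [h3]
  rw [Polynomial.aeval_algHom_apply, hd, Unitary.conjStarAlgAut_apply]
  rfl

lemma quad_eq {n : ℕ} (U : Matrix (Fin n) (Fin n) ℝ) (d x : Fin n → ℝ) :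
    x ⬝ᵥ ((U * diagonal d * Uᵀ) *ᵥ x) = ∑ i, d i * (Uᵀ *ᵥ x) i ^ 2 := by
  rw [← mulVec_mulVec, ← mulVec_mulVec, dotProduct_mulVec, ← mulVec_transpose]
  simp only [dotProduct, mulVec_diagonal]
  exact Finset.sum_congr rfl fun i _ => by ring

/-- **Non-increasing Dirichlet energy.**
If `L` is real symmetric PSD and `0 ≤ p(λ) ≤ 1` on all eigenvalues `λ` of `L`,
then the Dirichlet energy does not increase under the polynomial filter `p(L)`:
`⟨p(L) x, L (p(L) x)⟩ ≤ ⟨x, L x⟩`. -/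
theorem dirichlet_energy_nonincreasing
    {n : ℕ} (L : Matrix (Fin n) (Fin n) ℝ) (hL : L.IsHermitian)
    (hPSD : L.PosSemidef) (p : Polynomial ℝ)
    (hp : ∀ i, 0 ≤ p.eval (hL.eigenvalues i) ∧ p.eval (hL.eigenvalues i) ≤ 1)
    (x : Fin n → ℝ) :
    ((Polynomial.aeval L p).mulVec x) ⬝ᵥ (L.mulVec ((Polynomial.aeval L p).mulVec x))
      ≤ x ⬝ᵥ (L.mulVec x) := by
  obtain ⟨U, hU⟩ := aeval_quadForm L hL
  have hsymm : (Polynomial.aeval L p)ᵀ = Polynomial.aeval L p := by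
    rw [hU]
    simp [Matrix.transpose_mul, Matrix.mul_assoc]
  have e1 : ((Polynomial.aeval L p).mulVec x) ⬝ᵥ (L.mulVec ((Polynomial.aeval L p).mulVec x))
      = x ⬝ᵥ ((Polynomial.aeval L (p * (Polynomial.X * p))) *ᵥ x) := by
    rw [map_mul, map_mul, Polynomial.aeval_X, ← mulVec_mulVec, ← mulVec_mulVec,
      dotProduct_mulVec x, ← mulVec_transpose, hsymm]
  have e2 : x ⬝ᵥ (L.mulVec x) = x ⬝ᵥ ((Polynomial.aeval L (Polynomial.X : Polynomial ℝ)) *ᵥ x) := by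
    rw [Polynomial.aeval_X]
  rw [e1, e2, hU, hU, quad_eq, quad_eq]
  refine Finset.sum_le_sum fun i _ => mul_le_mul_of_nonneg_right ?_ (sq_nonneg _)
  obtain ⟨h0, h1⟩ := hp i
  have hl := hPSD.eigenvalues_nonneg i
  simp only [Polynomial.eval_mul, Polynomial.eval_X]
  have h2 : p.eval (hL.eigenvalues i) * p.eval (hL.eigenvalues i) ≤ 1 := mul_le_one₀ h1 h0 h1
  nlinarith [mul_le_mul_of_nonneg_left h2 hl]
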